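/- arXiv:2209.05028 — 2 statements merged into one kernel-verified Lean document; each statement's English description precedes it below -/
import Mathlib

section
/- In the multinomial assignment setting, if m(n)·n^{-2}/log n → ∞ as n → ∞, then E[min_{σ ∈ S_n} Σ_{i=1}^n X_{iσ(i)}] = (m(n)/n)(1+o(1)); that is, (n/m(n))·E[min_{σ} Σ_{i=1}^n X_{iσ(i)}] → 1 as n → ∞. -/
open MeasureTheory Filter Real

noncomputable section

/-- The uniform measure on the `n × n` grid of cells. -/
def cellMeasure (n : ℕ) : Measure (Fin n × Fin n) :=
  ((n : ENNReal) ^ 2)⁻¹ • Measure.count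

/-- The law of `m` i.i.d. points, each uniformly distributed on the `n × n` grid;
under this measure the matrix of cell counts is multinomial `M(m, n²)`. -/
def gridMeasure (m n : ℕ) : Measure (Fin m → Fin n × Fin n) :=
  Measure.pi fun _ => cellMeasure n

/-- `X_{ij}`: the number of the `m` points falling in cell `(i, j)`. -/
def cellCount {m n : ℕ} (i j : Fin n) (ω : Fin m → Fin n × Fin n) : ℕ :=
  (Finset.univ.filter fun k => ω k = (i, j)).card

/-- The assignment sum `S(σ) = ∑ i, X_{i σ(i)}`. -/
def assignSum {m n : ℕ} (σ : Equiv.Perm (Fin n)) (ω : Fin m → Fin n × Fin n) : ℝ :=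
  ∑ i, (cellCount i (σ i) ω : ℝ)

/-- `max_{σ ∈ S_n} S(σ)`. -/
def maxAssign {m n : ℕ} (ω : Fin m → Fin n × Fin n) : ℝ :=
  ⨆ σ : Equiv.Perm (Fin n), assignSum σ ω

/-- `min_{σ ∈ S_n} S(σ)`. -/
def minAssign {m n : ℕ} (ω : Fin m → Fin n × Fin n) : ℝ :=
  ⨅ σ : Equiv.Perm (Fin n), assignSum σ ω

/-- `E[max_{σ ∈ S_n} S(σ)]`. -/
def EmaxAssign (m n : ℕ) : ℝ :=
  ∫ ω, maxAssign ω ∂(gridMeasure m n)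

/-- `E[min_{σ ∈ S_n} S(σ)]`. -/
def EminAssign (m n : ℕ) : ℝ :=
  ∫ ω, minAssign ω ∂(gridMeasure m n)

lemma aux_prob (n : ℕ) (hn : 0 < n) : IsProbabilityMeasure (cellMeasure n) := by
  constructor
  have h0 : (n : ENNReal) ≠ 0 := by exact_mod_cast hn.ne'
  simp only [cellMeasure, Measure.smul_apply, smul_eq_mul]
  rw [Measure.count_apply MeasurableSet.univ]
  have : (Set.univ : Set (Fin n × Fin n)).encard = ((n ^ 2 : ℕ) : ℕ∞) := by
    rw [Set.encard_univ]; simp [sq]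
  rw [this]
  push_cast
  exact ENNReal.inv_mul_cancel (by simpa using h0) (by simp)

lemma aux_int (n : ℕ) (f : Fin n × Fin n → ℝ) :
    ∫ x, f x ∂(cellMeasure n) = ((n : ℝ) ^ 2)⁻¹ * ∑ x, f x := by
  rw [cellMeasure, integral_smul_measure, integral_count]
  simp

lemma aux_upper {m n : ℕ} (hn : 0 < n) (ω : Fin m → Fin n × Fin n) :
    minAssign ω ≤ (m : ℝ) / n := by
  haveI : NeZero n := ⟨hn.ne'⟩
  have hle : ∀ s : Fin n, minAssign ω ≤ assignSum (Equiv.addRight s) ω := fun s =>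
    ciInf_le (Set.finite_range _).bddBelow (Equiv.addRight s)
  have hsum : ∑ s : Fin n, assignSum (Equiv.addRight s) ω = (m : ℝ) := by
    unfold assignSum
    rw [Finset.sum_comm]
    have : ∀ i : Fin n, ∑ s : Fin n, (cellCount i (Equiv.addRight s i) ω : ℝ)
        = ∑ j : Fin n, (cellCount i j ω : ℝ) := fun i =>
      Equiv.sum_comp (Equiv.addLeft i) (fun j => (cellCount i j ω : ℝ))
    rw [Finset.sum_congr rfl (fun i _ => this i),
      ← Fintype.sum_prod_type' (fun i j => (cellCount i j ω : ℝ))]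
    have h2 := Finset.card_eq_sum_card_fiberwise (f := ω) (s := Finset.univ) (t := Finset.univ)
      (fun _ _ => Finset.mem_coe.2 (Finset.mem_univ _))
    rw [Finset.card_univ, Fintype.card_fin] at h2
    unfold cellCount
    exact_mod_cast h2.symm
  have h3 : ∑ _s : Fin n, minAssign ω ≤ ∑ s : Fin n, assignSum (Equiv.addRight s) ω :=
    Finset.sum_le_sum fun s _ => hle s
  rw [hsum] at h3
  simp at h3
  rw [le_div_iff₀ (by exact_mod_cast hn)]
  linarith

lemma aux_mgf (m n : ℕ) (hn : 0 < n) (t : ℝ) (i j : Fin n) :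
    ∫ ω, Real.exp (-t * (cellCount i j ω : ℝ)) ∂(gridMeasure m n)
      ≤ Real.exp (-(1 - Real.exp (-t)) * (m / (n : ℝ) ^ 2)) := by
  haveI := aux_prob n hn
  have hn' : (0 : ℝ) < n := by exact_mod_cast hn
  have h1 : ∀ ω : Fin m → Fin n × Fin n, Real.exp (-t * (cellCount i j ω : ℝ))
      = ∏ k, (if ω k = (i, j) then Real.exp (-t) else 1) := by
    intro ω
    rw [Finset.prod_ite]
    simp only [Finset.prod_const, one_pow, mul_one]
    rw [← Real.exp_nat_mul, mul_comm]
    rfl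
  simp_rw [h1]
  unfold gridMeasure
  rw [integral_fintype_prod_eq_prod (f := fun _ x => if x = (i, j) then Real.exp (-t) else (1 : ℝ))]
  rw [Finset.prod_const, aux_int]
  have h2 : ∑ x : Fin n × Fin n, (if x = (i, j) then Real.exp (-t) else (1 : ℝ))
      = (n : ℝ) ^ 2 - (1 - Real.exp (-t)) := by
    have : ∀ x : Fin n × Fin n, (if x = (i, j) then Real.exp (-t) else (1 : ℝ))
        = 1 - (if x = (i, j) then (1 - Real.exp (-t)) else 0) := by
      intro x; split_ifs <;> ring
    simp_rw [this]
    rw [Finset.sum_sub_distrib]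
    simp [sq]
  have h0 : (0 : ℝ) ≤ ((n : ℝ) ^ 2)⁻¹ *
      ∑ x : Fin n × Fin n, (if x = (i, j) then Real.exp (-t) else (1 : ℝ)) := by
    refine mul_nonneg (by positivity) (Finset.sum_nonneg fun x _ => ?_)
    split_ifs <;> positivity
  have h3 : ((n : ℝ) ^ 2)⁻¹ *
      ∑ x : Fin n × Fin n, (if x = (i, j) then Real.exp (-t) else (1 : ℝ))
      ≤ Real.exp (-(1 - Real.exp (-t)) / (n : ℝ) ^ 2) := by
    refine le_trans (le_of_eq ?_) (Real.add_one_le_exp _)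
    rw [h2]; field_simp; ring
  refine (pow_le_pow_left₀ h0 h3 _).trans (le_of_eq ?_)
  rw [← Real.exp_nat_mul]
  simp
  ring

lemma aux_lower (m n : ℕ) (hm : 0 < m) (hn : 0 < n) (t : ℝ) (ht : 0 < t) :
    1 / (1 + t) - (2 / t) * ((m : ℝ) / (n : ℝ) ^ 2 / Real.log n)⁻¹
      ≤ (n : ℝ) / m * EminAssign m n := by
  haveI := aux_prob n hn
  haveI : IsProbabilityMeasure (gridMeasure m n) := by unfold gridMeasure; infer_instance
  haveI : NeZero n := ⟨hn.ne'⟩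
  have hn' : (0 : ℝ) < n := by exact_mod_cast hn
  have hm' : (0 : ℝ) < m := by exact_mod_cast hm
  set B : ℝ := 2 * Real.log n - (1 - Real.exp (-t)) * (m / (n : ℝ) ^ 2) with hB
  have hpt : ∀ ω : Fin m → Fin n × Fin n, Real.exp (-t * (minAssign ω / n))
      ≤ ∑ x : Fin n × Fin n, Real.exp (-t * (cellCount x.1 x.2 ω : ℝ)) := by
    intro ω
    obtain ⟨x, hx⟩ := Finite.exists_min (fun x : Fin n × Fin n => (cellCount x.1 x.2 ω : ℝ))
    have h1 : (n : ℝ) * (cellCount x.1 x.2 ω : ℝ) ≤ minAssign ω := by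
      refine le_ciInf fun σ => ?_
      unfold assignSum
      calc (n : ℝ) * (cellCount x.1 x.2 ω : ℝ) = ∑ _i : Fin n, (cellCount x.1 x.2 ω : ℝ) := by simp
        _ ≤ _ := Finset.sum_le_sum fun i _ => hx (i, σ i)
    have h2 : (cellCount x.1 x.2 ω : ℝ) ≤ minAssign ω / n := by
      rw [le_div_iff₀ hn']; linarith
    refine le_trans ?_ (Finset.single_le_sum (f := fun x : Fin n × Fin n =>
      Real.exp (-t * (cellCount x.1 x.2 ω : ℝ))) (fun _ _ => (Real.exp_pos _).le)
      (Finset.mem_univ x))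
    apply Real.exp_le_exp.2
    nlinarith
  have hA : ∫ ω, Real.exp (-t * (minAssign ω / n)) ∂(gridMeasure m n) ≤ Real.exp B := by
    calc _ ≤ ∫ ω, ∑ x : Fin n × Fin n, Real.exp (-t * (cellCount x.1 x.2 ω : ℝ))
          ∂(gridMeasure m n) := integral_mono Integrable.of_finite Integrable.of_finite hpt
      _ = ∑ x : Fin n × Fin n, ∫ ω, Real.exp (-t * (cellCount x.1 x.2 ω : ℝ))
          ∂(gridMeasure m n) := integral_finsetSum _ fun _ _ => Integrable.of_finite
      _ ≤ ∑ x : Fin n × Fin n, Real.exp (-(1 - Real.exp (-t)) * (m / (n : ℝ) ^ 2)) :=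
          Finset.sum_le_sum fun x _ => aux_mgf m n hn t x.1 x.2
      _ = Real.exp B := by
          have : B = Real.log n + Real.log n + -(1 - Real.exp (-t)) * (m / (n : ℝ) ^ 2) := by
            rw [hB]; ring
          rw [this, Real.exp_add, Real.exp_add, Real.exp_log hn']
          simp
  have hT : Real.exp B * (1 + (-t * (EminAssign m n / n)) - B)
      ≤ ∫ ω, Real.exp (-t * (minAssign ω / n)) ∂(gridMeasure m n) := by
    calc _ = ∫ ω, (Real.exp B * (1 - B) + (Real.exp B * (-t) / n) * minAssign ω)
          ∂(gridMeasure m n) := by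
          rw [integral_add Integrable.of_finite Integrable.of_finite, integral_const,
            integral_const_mul]
          simp only [EminAssign, probReal_univ, one_smul]
          ring
      _ ≤ _ := by
          refine integral_mono Integrable.of_finite Integrable.of_finite fun ω => ?_
          have h1 := Real.add_one_le_exp (-t * (minAssign ω / n) - B)
          have h2 : Real.exp (-t * (minAssign ω / n))
              = Real.exp B * Real.exp (-t * (minAssign ω / n) - B) := by
            rw [← Real.exp_add]; ring_nf
          have h3 := mul_le_mul_of_nonneg_left h1 (Real.exp_pos B).le
          simp only
          rw [h2]
          refine le_trans (le_of_eq ?_) h3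
          ring
  have h4 : -B ≤ t * (EminAssign m n / n) := by
    have := (hT.trans hA)
    have h5 : 1 + (-t * (EminAssign m n / n)) - B ≤ 1 := by
      by_contra hc
      push Not at hc
      nlinarith [Real.exp_pos B]
    linarith
  have he : t / (1 + t) ≤ 1 - Real.exp (-t) := by
    have h6 : Real.exp (-t) ≤ 1 / (1 + t) := by
      rw [Real.exp_neg, ← one_div]
      exact one_div_le_one_div_of_le (by linarith) (by linarith [Real.add_one_le_exp t])
    have h7 : t / (1 + t) = 1 - 1 / (1 + t) := by field_simp; ring
    linarith
  have hq : (0 : ℝ) < m / (n : ℝ) ^ 2 := by positivity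
  have h8 : t / (1 + t) * (m / (n : ℝ) ^ 2) - 2 * Real.log n ≤ t * (EminAssign m n / n) := by
    have := mul_le_mul_of_nonneg_right he hq.le
    linarith
  have h9 := mul_le_mul_of_nonneg_left h8 (show (0 : ℝ) ≤ (n : ℝ) ^ 2 / (m * t) by positivity)
  refine le_trans (le_of_eq ?_) (h9.trans (le_of_eq ?_))
  · rw [inv_div]; field_simp
  · field_simp

/-- **Quasi-Gaussian zone, minima.**  If `m(n) n⁻² / log n → ∞`, then
`E[min_σ ∑ i, X_{i σ(i)}] = (m(n)/n) (1 + o(1))`. -/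
theorem expected_min_quasiGaussian (m : ℕ → ℕ) (hm : ∀ n, 0 < m n)
    (h : Tendsto (fun n : ℕ => ((m n : ℝ) / (n : ℝ) ^ 2) / Real.log n) atTop atTop) :
    Tendsto (fun n : ℕ => ((n : ℝ) / (m n : ℝ)) * EminAssign (m n) n) atTop (nhds 1) := by
  rw [tendsto_order]
  constructor
  · intro a ha
    obtain ⟨t, ht, hta⟩ : ∃ t : ℝ, 0 < t ∧ a < 1 / (1 + t) := by
      have hc : Tendsto (fun t : ℝ => 1 / (1 + t)) (nhdsWithin 0 (Set.Ioi 0)) (nhds 1) := by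
        have : ContinuousAt (fun t : ℝ => 1 / (1 + t)) 0 := by
          apply ContinuousAt.div <;> first | fun_prop | norm_num
        have h2 := this.tendsto
        simp only [add_zero, div_one] at h2
        exact h2.mono_left nhdsWithin_le_nhds
      obtain ⟨t, h1, h2⟩ := ((hc.eventually (lt_mem_nhds ha)).and self_mem_nhdsWithin).exists
      exact ⟨t, h2, h1⟩
    have hl : Tendsto (fun n : ℕ => 1 / (1 + t)
        - (2 / t) * ((m n : ℝ) / (n : ℝ) ^ 2 / Real.log n)⁻¹) atTop (nhds (1 / (1 + t))) := by
      simpa using (h.inv_tendsto_atTop.const_mul (2 / t)).const_sub (1 / (1 + t))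
    filter_upwards [hl.eventually (lt_mem_nhds hta), eventually_gt_atTop 0] with n h1 h2
    exact h1.trans_le (aux_lower (m n) n (hm n) h2 t ht)
  · intro a ha
    filter_upwards [eventually_gt_atTop 0] with n hn
    refine lt_of_le_of_lt ?_ ha
    have hn' : (0 : ℝ) < n := by exact_mod_cast hn
    have hm' : (0 : ℝ) < m n := by exact_mod_cast hm n
    haveI := aux_prob n hn
    haveI : IsProbabilityMeasure (gridMeasure (m n) n) := by unfold gridMeasure; infer_instance
    have h1 : EminAssign (m n) n ≤ (m n : ℝ) / n := by
      have := integral_mono (μ := gridMeasure (m n) n) Integrable.of_finite Integrable.of_finite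
        (fun ω => aux_upper hn ω)
      simpa [EminAssign] using this
    calc (n : ℝ) / m n * EminAssign (m n) n ≤ (n : ℝ) / m n * ((m n : ℝ) / n) :=
          mul_le_mul_of_nonneg_left h1 (by positivity)
      _ = 1 := by field_simp

end
end

section
/- In the multinomial assignment setting, write p_n = n^{-2} and suppose m(n)·p_n/log n → 0 as n → ∞, while for every δ > 0 one has n^{δ}·m(n)·p_n → ∞. Then E[max_{σ ∈ S_n} Σ_{i=1}^n X_{iσ(i)}] = (n·log n / log(log n/(m(n)·p_n)))·(1+o(1)); that is, E[max_σ Σ_i X_{iσ(i)}]·log(log n/(m(n)p_n))/(n·log n) → 1 as n → ∞. -/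
open MeasureTheory Filter Real

noncomputable section

lemma Emax_eq (m n : ℕ) (hn : 0 < n) :
    EmaxAssign m n = (∑ ω : Fin m → Fin n × Fin n, maxAssign ω) / ((n : ℝ) ^ 2) ^ m := by
  have : IsFiniteMeasure (cellMeasure n) := by
    refine ⟨?_⟩
    simp only [cellMeasure, Measure.smul_apply, smul_eq_mul]
    refine ENNReal.mul_lt_top ?_ ?_
    · rw [ENNReal.inv_lt_top]
      positivity
    · exact measure_lt_top _ _
  have : IsFiniteMeasure (gridMeasure m n) := by
    unfold gridMeasure; infer_instance
  have hs : ∀ ω : Fin m → Fin n × Fin n,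
      (gridMeasure m n).real {ω} = (((n : ℝ) ^ 2) ^ m)⁻¹ := by
    intro ω
    rw [Measure.real, gridMeasure, Measure.pi_singleton]
    simp [cellMeasure]
  unfold EmaxAssign
  rw [integral_fintype (Integrable.of_finite)]
  simp only [hs, smul_eq_mul]
  rw [← Finset.mul_sum, div_eq_inv_mul]

lemma assignSum_eq {m n : ℕ} (σ : Equiv.Perm (Fin n)) (ω : Fin m → Fin n × Fin n) :
    assignSum σ ω = ∑ k, if σ (ω k).1 = (ω k).2 then (1 : ℝ) else 0 := by
  unfold assignSum cellCount
  simp only [Finset.card_filter]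
  push_cast
  rw [Finset.sum_comm]
  refine Finset.sum_congr rfl fun k _ => ?_
  rw [Finset.sum_eq_single (ω k).1]
  · congr 1
    rw [Prod.ext_iff]; simp [eq_comm]
  · intro i _ hi
    rw [if_neg]
    intro h; exact hi (by rw [h])
  · simp

lemma sum_exp (m n : ℕ) (σ : Equiv.Perm (Fin n)) (θ : ℝ) :
    ∑ ω : Fin m → Fin n × Fin n, exp (θ * assignSum σ ω) =
      ((n : ℝ) * exp θ + ((n : ℝ) ^ 2 - n)) ^ m := by
  have h : ∀ ω : Fin m → Fin n × Fin n, exp (θ * assignSum σ ω) =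
      ∏ k, (if σ (ω k).1 = (ω k).2 then exp θ else 1) := by
    intro ω
    rw [assignSum_eq, Finset.mul_sum, exp_sum]
    refine Finset.prod_congr rfl fun k _ => ?_
    split_ifs <;> simp
  simp only [h]
  rw [← Fintype.sum_pow (fun c : Fin n × Fin n => if σ c.1 = c.2 then exp θ else 1) m]
  congr 1
  have h2 : ∀ c : Fin n × Fin n, (if σ c.1 = c.2 then exp θ else 1) =
      (if σ c.1 = c.2 then exp θ - 1 else 0) + 1 := by
    intro c; split_ifs <;> simp
  simp only [h2]
  rw [Finset.sum_add_distrib, Fintype.sum_prod_type]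
  simp
  ring

lemma maxAssign_exists {m n : ℕ} (ω : Fin m → Fin n × Fin n) :
    ∃ σ : Equiv.Perm (Fin n), assignSum σ ω = maxAssign ω := by
  exact exists_eq_ciSup_of_finite

lemma upper (m n : ℕ) (hn : 0 < n) (θ : ℝ) :
    EmaxAssign m n * θ ≤ n * log n + (m : ℝ) / (n : ℝ) ^ 2 * n * exp θ := by
  have hn' : (0 : ℝ) < n := by exact_mod_cast hn
  set E : ℝ := exp ((m : ℝ) / (n : ℝ) ^ 2 * n * exp θ) with hE
  set A : ℝ := (n.factorial : ℝ) * E with hA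
  have hf : (0 : ℝ) < n.factorial := by exact_mod_cast n.factorial_pos
  have hA0 : 0 < A := by positivity
  have h1 : ∀ ω : Fin m → Fin n × Fin n,
      maxAssign ω * θ ≤ log A - 1 + (∑ σ : Equiv.Perm (Fin n), exp (θ * assignSum σ ω)) / A := by
    intro ω
    obtain ⟨σ, hσ⟩ := maxAssign_exists ω
    have h2 : exp (θ * maxAssign ω) ≤ ∑ σ : Equiv.Perm (Fin n), exp (θ * assignSum σ ω) := by
      rw [← hσ]
      exact Finset.single_le_sum (f := fun σ : Equiv.Perm (Fin n) => exp (θ * assignSum σ ω))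
        (fun _ _ => (exp_pos _).le) (Finset.mem_univ σ)
    have h3 := add_one_le_exp (θ * maxAssign ω - log A)
    rw [exp_sub, exp_log hA0] at h3
    have h4 := div_le_div_of_nonneg_right h2 hA0.le
    linarith
  have h5 : ∑ ω : Fin m → Fin n × Fin n, ∑ σ : Equiv.Perm (Fin n), exp (θ * assignSum σ ω)
      ≤ ((n : ℝ) ^ 2) ^ m * A := by
    rw [Finset.sum_comm]
    simp only [sum_exp]
    rw [Finset.sum_const, Finset.card_univ, Fintype.card_perm, Fintype.card_fin, nsmul_eq_mul, hA]
    have h6 : (n : ℝ) * exp θ + ((n : ℝ) ^ 2 - n) ≤ (n : ℝ) ^ 2 * exp (exp θ / n) := by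
      have := add_one_le_exp (exp θ / n)
      have h7 : (n : ℝ) ^ 2 * (exp θ / n + 1) ≤ (n : ℝ) ^ 2 * exp (exp θ / n) := by gcongr
      have h8 : (n : ℝ) ^ 2 * (exp θ / n + 1) = n * exp θ + n ^ 2 := by field_simp
      linarith
    have h9 : 0 ≤ (n : ℝ) * exp θ + ((n : ℝ) ^ 2 - n) := by
      have : (1 : ℝ) ≤ n := by exact_mod_cast hn
      have : 0 ≤ (n : ℝ) * exp θ := by positivity
      nlinarith
    have h10 := pow_le_pow_left₀ h9 h6 m
    rw [mul_pow, ← exp_nat_mul] at h10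
    have h11 : (m : ℝ) * (exp θ / n) = (m : ℝ) / (n : ℝ) ^ 2 * n * exp θ := by field_simp
    rw [h11, ← hE] at h10
    calc _ ≤ (n.factorial : ℝ) * (((n : ℝ) ^ 2) ^ m * E) := by gcongr
      _ = _ := by ring
  have hN : (0 : ℝ) < ((n : ℝ) ^ 2) ^ m := by positivity
  have h12 : EmaxAssign m n * θ ≤ log A := by
    rw [Emax_eq m n hn, div_mul_eq_mul_div, div_le_iff₀ hN, Finset.sum_mul]
    calc _ ≤ ∑ ω : Fin m → Fin n × Fin n, (log A - 1 + (∑ σ : Equiv.Perm (Fin n), exp (θ * assignSum σ ω)) / A) :=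
          Finset.sum_le_sum fun ω _ => h1 ω
      _ = ((n : ℝ) ^ 2) ^ m * (log A - 1) + (∑ ω : Fin m → Fin n × Fin n, ∑ σ : Equiv.Perm (Fin n), exp (θ * assignSum σ ω)) / A := by
          rw [Finset.sum_add_distrib, Finset.sum_div]
          simp [sq]
          ring
      _ ≤ ((n : ℝ) ^ 2) ^ m * (log A - 1) + ((n : ℝ) ^ 2) ^ m := by
          gcongr
          rwa [div_le_iff₀ hA0]
      _ = _ := by ring
  refine h12.trans ?_
  rw [hA, log_mul hf.ne' (exp_pos _).ne', log_exp]
  gcongr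
  rw [← log_pow]
  apply log_le_log hf
  exact_mod_cast n.factorial_le_pow

lemma det_lower {m n : ℕ} (k : ℕ) (ω : Fin m → Fin n × Fin n) :
    ∃ A B : Finset (Fin n), A.card = B.card ∧ (∀ a ∈ A, ∀ b ∈ B, cellCount a b ω < k) ∧
      (k : ℝ) * ((n : ℝ) - A.card) ≤ maxAssign ω := by
  classical
  let bad : Equiv.Perm (Fin n) → Finset (Fin n) :=
    fun σ => Finset.univ.filter fun i => cellCount i (σ i) ω < k
  have hbad : ∀ σ i, i ∈ bad σ ↔ cellCount i (σ i) ω < k := by simp [bad]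
  obtain ⟨σ, -, hσ⟩ := Finset.exists_min_image Finset.univ (fun σ => (bad σ).card)
    Finset.univ_nonempty
  refine ⟨bad σ, (bad σ).map σ.toEmbedding, by simp, ?_, ?_⟩
  · intro a ha b hb
    by_contra hab
    rw [Finset.mem_map] at hb
    obtain ⟨a', ha', rfl⟩ := hb
    simp only [Equiv.coe_toEmbedding] at hab
    have h := hσ (σ * Equiv.swap a a') (Finset.mem_univ _)
    have hlt : (bad (σ * Equiv.swap a a')).card < (bad σ).card := by
      apply Finset.card_lt_card
      rw [Finset.ssubset_iff_of_subset]
      · refine ⟨a, ha, ?_⟩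
        rw [hbad, Equiv.Perm.mul_apply, Equiv.swap_apply_left]
        exact hab
      · intro i hi
        by_cases h1 : i = a
        · rwa [h1]
        by_cases h2 : i = a'
        · rwa [h2]
        rw [hbad, Equiv.Perm.mul_apply, Equiv.swap_apply_of_ne_of_ne h1 h2] at hi
        rw [hbad]
        exact hi
    omega
  · have h1 : assignSum σ ω ≤ maxAssign ω :=
      le_ciSup (f := fun σ : Equiv.Perm (Fin n) => assignSum σ ω) (Set.finite_range _).bddAbove σ
    refine le_trans ?_ h1
    unfold assignSum
    have h2 : ∀ i, (k : ℝ) - (if i ∈ bad σ then (k : ℝ) else 0) ≤ (cellCount i (σ i) ω : ℝ) := by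
      intro i
      split_ifs with hi
      · simp
      · simp only [bad, Finset.mem_filter, Finset.mem_univ, true_and, not_lt] at hi
        simpa using hi
    refine le_trans (le_of_eq ?_) (Finset.sum_le_sum fun i _ => h2 i)
    rw [Finset.sum_sub_distrib]
    simp [Finset.sum_ite_mem]
    ring

lemma fact_bound (m : ℕ) (hm : 0 < m) :
    (m.factorial : ℝ) * exp m ≤ exp 1 * m * (m : ℝ) ^ m := by
  induction m, hm using Nat.le_induction with
  | base => simp
  | succ m hm ih =>
    have hm' : (0 : ℝ) < m := by exact_mod_cast hm
    rw [Nat.factorial_succ]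
    push_cast
    rw [exp_add]
    have h1 : (m : ℝ) ^ (m + 1) * exp 1 ≤ ((m : ℝ) + 1) ^ (m + 1) := by
      have h2 : (m : ℝ) ≤ ((m : ℝ) + 1) * exp (-(1 / ((m : ℝ) + 1))) := by
        have := add_one_le_exp (-(1 / ((m : ℝ) + 1)))
        calc (m : ℝ) = ((m : ℝ) + 1) * (-(1 / ((m : ℝ) + 1)) + 1) := by field_simp; ring
          _ ≤ _ := by gcongr
      have h3 := pow_le_pow_left₀ hm'.le h2 (m + 1)
      rw [mul_pow, ← exp_nat_mul] at h3
      have h4 : ((m + 1 : ℕ) : ℝ) * (-(1 / ((m : ℝ) + 1))) = -1 := by push_cast; field_simp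
      rw [h4, exp_neg] at h3
      have h5 := exp_pos 1
      rwa [← div_eq_mul_inv, le_div_iff₀ h5] at h3
    calc ((m : ℝ) + 1) * m.factorial * (exp m * exp 1)
        = ((m : ℝ) + 1) * exp 1 * (m.factorial * exp m) := by ring
      _ ≤ ((m : ℝ) + 1) * exp 1 * (exp 1 * m * (m : ℝ) ^ m) := by gcongr
      _ = ((m : ℝ) + 1) * exp 1 * ((m : ℝ) ^ (m + 1) * exp 1) := by ring
      _ ≤ ((m : ℝ) + 1) * exp 1 * (((m : ℝ) + 1) ^ (m + 1)) := by gcongr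
      _ = _ := by ring

def cnt {ι : Type*} [DecidableEq ι] {m : ℕ} (ω : Fin m → ι) (c : ι) : ℕ :=
  (Finset.univ.filter fun k => ω k = c).card

lemma sum_cnt {ι : Type*} [DecidableEq ι] [Fintype ι] {m : ℕ} (ω : Fin m → ι) :
    ∑ c, cnt ω c = m := by
  unfold cnt
  rw [Finset.sum_card_fiberwise_eq_card_filter]
  simp

lemma card_fiber {ι : Type*} [DecidableEq ι] [Fintype ι] (m : ℕ) (x : ι → ℕ) (hx : ∑ c, x c = m) :
    (Finset.univ.filter fun ω : Fin m → ι => cnt ω = x).card * ∏ c, (x c).factorial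
      = m.factorial := by
  classical
  have h := MvPolynomial.coeff_linearCombination_X_pow_of_fintype (R := ℕ)
    (fun _ : ι => 1) (Finsupp.equivFunOnFinite.symm x) m
  have hs : (Finsupp.equivFunOnFinite.symm x).sum (fun _ m ↦ m) = m := by
    rw [Finsupp.sum_fintype _ _ (by simp)]
    simpa using hx
  rw [if_pos hs] at h
  simp only [one_smul, one_pow, Fintype.sum_pow, MvPolynomial.coeff_sum, Finsupp.prod,
    Finset.prod_const_one, mul_one, Nat.cast_id] at h
  have h2 : ∀ ω : Fin m → ι, MvPolynomial.coeff (Finsupp.equivFunOnFinite.symm x)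
      (∏ i, MvPolynomial.X (R := ℕ) (ω i)) = if cnt ω = x then 1 else 0 := by
    intro ω
    have h3 : (∏ i, MvPolynomial.X (R := ℕ) (ω i)) =
        MvPolynomial.monomial (Finsupp.equivFunOnFinite.symm (cnt ω)) 1 := by
      have h4 : (Finsupp.equivFunOnFinite.symm (cnt ω)) = ∑ i, Finsupp.single (ω i) 1 := by
        ext c
        simp [cnt, Finsupp.finsetSum_apply, Finsupp.single_apply]
      rw [h4, MvPolynomial.monomial_sum_one]
      rfl
    rw [h3, MvPolynomial.coeff_monomial]
    simp
  simp only [h2] at h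
  rw [← Finset.card_filter] at h
  rw [h, Finsupp.multinomial_eq_of_support_subset (Finset.subset_univ _), mul_comm]
  have := Nat.multinomial_spec Finset.univ x
  rw [hx] at this
  exact this

lemma count_bound {ι : Type*} [DecidableEq ι] [Fintype ι] (m : ℕ) (ok : ι → Finset ℕ)
    (z : ℝ) (hz : 0 < z) :
    ((Finset.univ.filter fun ω : Fin m → ι => ∀ c, cnt ω c ∈ ok c).card : ℝ) * z ^ m
      ≤ m.factorial * ∏ c, ∑ x ∈ ok c, z ^ x / x.factorial := by
  classical
  rw [Finset.card_eq_sum_card_fiberwise (f := cnt) (t := Fintype.piFinset ok)]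
  · push_cast
    rw [Finset.prod_univ_sum, Finset.sum_mul, Finset.mul_sum]
    refine Finset.sum_le_sum fun x _ => ?_
    have hnn : 0 ≤ (m.factorial : ℝ) * ∏ c, z ^ x c / (x c).factorial := by positivity
    by_cases hx : ∑ c, x c = m
    · have h1 := card_fiber m x hx
      have h2 : ((Finset.univ.filter fun ω : Fin m → ι => cnt ω = x).card : ℝ)
          * ∏ c, ((x c).factorial : ℝ) = m.factorial := by exact_mod_cast h1
      have hle : (({ω ∈ {ω : Fin m → ι | ∀ c, cnt ω c ∈ ok c} | cnt ω = x} : Finset _).card : ℝ) ≤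
          (Finset.univ.filter fun ω : Fin m → ι => cnt ω = x).card := by
        exact_mod_cast Finset.card_le_card (Finset.filter_subset_filter _ (Finset.subset_univ _))
      have hp : (0 : ℝ) < ∏ c, ((x c).factorial : ℝ) :=
        Finset.prod_pos fun c _ => by exact_mod_cast Nat.factorial_pos _
      rw [Finset.prod_div_distrib, Finset.prod_pow_eq_pow_sum, hx, ← h2]
      calc _ ≤ ((Finset.univ.filter fun ω : Fin m → ι => cnt ω = x).card : ℝ) * z ^ m := by gcongr
        _ = _ := by field_simp
    · rw [Finset.filter_false_of_mem]
      · simpa using hnn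
      · intro ω _ h
        apply hx
        rw [← h, sum_cnt]
  · intro ω hω
    simpa using hω

lemma box_bound (m n k : ℕ) (hm : 0 < m) (hn : 0 < n) (A B : Finset (Fin n)) (z q : ℝ)
    (hz : z = (m : ℝ) / (n : ℝ) ^ 2) (hq : q = exp (-z) * z ^ k / k.factorial) :
    ((Finset.univ.filter fun ω : Fin m → Fin n × Fin n =>
        ∀ a ∈ A, ∀ b ∈ B, cellCount a b ω < k).card : ℝ)
      ≤ exp 1 * m * exp (-(q * (A.card * B.card))) * ((n : ℝ) ^ 2) ^ m := by
  classical
  have hm' : (0 : ℝ) < m := by exact_mod_cast hm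
  have hn' : (0 : ℝ) < n := by exact_mod_cast hn
  have hz0 : 0 < z := by rw [hz]; positivity
  have h1 := count_bound m
    (fun c : Fin n × Fin n => if c ∈ A ×ˢ B then Finset.range k else Finset.range (m + 1)) z hz0
  have h2 : ((Finset.univ.filter fun ω : Fin m → Fin n × Fin n =>
        ∀ a ∈ A, ∀ b ∈ B, cellCount a b ω < k).card : ℝ) ≤
      ((Finset.univ.filter fun ω : Fin m → Fin n × Fin n => ∀ c, cnt ω c ∈
        (if c ∈ A ×ˢ B then Finset.range k else Finset.range (m + 1))).card : ℝ) := by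
    norm_cast
    apply Finset.card_le_card
    intro ω hω
    simp only [Finset.mem_filter, Finset.mem_univ, true_and] at hω ⊢
    rintro ⟨a, b⟩
    split_ifs with hc
    · rw [Finset.mem_product] at hc
      rw [Finset.mem_range]
      exact hω a hc.1 b hc.2
    · rw [Finset.mem_range]
      have : cnt ω (a, b) ≤ (Finset.univ : Finset (Fin m)).card := Finset.card_filter_le _ _
      simp at this
      omega
  have h3 : ∏ c : Fin n × Fin n, ∑ x ∈ (if c ∈ A ×ˢ B then Finset.range k else Finset.range (m + 1)),
      z ^ x / (x.factorial : ℝ) ≤ exp m * exp (-(q * (A.card * B.card))) := by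
    have h4 : ∀ c : Fin n × Fin n,
        ∑ x ∈ (if c ∈ A ×ˢ B then Finset.range k else Finset.range (m + 1)),
          z ^ x / (x.factorial : ℝ) ≤ exp z * (if c ∈ A ×ˢ B then exp (-q) else 1) := by
      intro c
      split_ifs with hc
      · have h5 := Real.sum_le_exp_of_nonneg hz0.le (k + 1)
        rw [Finset.sum_range_succ] at h5
        have h6 : z ^ k / (k.factorial : ℝ) = exp z * q := by
          rw [hq, exp_neg]; field_simp
        have h7 : exp z * (-q + 1) ≤ exp z * exp (-q) := by
          gcongr
          exact add_one_le_exp _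
        linarith
      · rw [mul_one]
        exact Real.sum_le_exp_of_nonneg hz0.le (m + 1)
    refine (Finset.prod_le_prod (fun c _ => Finset.sum_nonneg fun x _ => by positivity)
      (fun c _ => h4 c)).trans (le_of_eq ?_)
    rw [Finset.prod_mul_distrib, Finset.prod_ite_mem, Finset.univ_inter, Finset.prod_const,
      Finset.prod_const, Finset.card_product, ← exp_nat_mul, ← exp_nat_mul]
    congr 2
    · simp [hz]; field_simp
    · push_cast; ring
  have hzm : z ^ m * ((n : ℝ) ^ 2) ^ m = (m : ℝ) ^ m := by
    rw [← mul_pow, hz]; congr 1; field_simp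
  have h8 := fact_bound m hm
  have hzp : 0 < z ^ m := by positivity
  set e := exp (-(q * (A.card * B.card))) with he
  refine le_of_mul_le_mul_right ?_ hzp
  calc _ ≤ _ := mul_le_mul_of_nonneg_right h2 hzp.le
    _ ≤ _ := h1
    _ ≤ (m.factorial : ℝ) * (exp m * e) := by gcongr
    _ = (m.factorial * exp m) * e := by ring
    _ ≤ (exp 1 * m * (m : ℝ) ^ m) * e := by gcongr
    _ = _ := by rw [← hzm]; ring

lemma lower (m n k : ℕ) (hm : 0 < m) (hn : 0 < n) (z q ε : ℝ) (hε : 0 ≤ ε) (hε1 : ε ≤ 1)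
    (hz : z = (m : ℝ) / (n : ℝ) ^ 2) (hq : q = exp (-z) * z ^ k / k.factorial) :
    (k : ℝ) * ((1 - ε) * n) * (1 - 4 ^ n * (exp 1 * m * exp (-(q * (ε * n) ^ 2))))
      ≤ EmaxAssign m n := by
  classical
  have hm' : (0 : ℝ) < m := by exact_mod_cast hm
  have hn' : (0 : ℝ) < n := by exact_mod_cast hn
  have hq0 : 0 ≤ q := by
    have : 0 ≤ z := by rw [hz]; positivity
    rw [hq]; positivity
  have hN : (0 : ℝ) < ((n : ℝ) ^ 2) ^ m := by positivity
  let P : Finset (Fin n) × Finset (Fin n) → Finset (Fin m → Fin n × Fin n) := fun AB =>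
    if ε * n < AB.1.card ∧ AB.1.card = AB.2.card then
      (Finset.univ.filter fun ω : Fin m → Fin n × Fin n =>
        ∀ a ∈ AB.1, ∀ b ∈ AB.2, cellCount a b ω < k) else ∅
  let Bd : Finset (Fin m → Fin n × Fin n) := Finset.univ.biUnion P
  have hP : ∀ AB, ((P AB).card : ℝ) ≤
      exp 1 * m * exp (-(q * (ε * n) ^ 2)) * ((n : ℝ) ^ 2) ^ m := by
    intro AB
    simp only [P]
    split_ifs with h
    · refine (box_bound m n k hm hn AB.1 AB.2 z q hz hq).trans ?_
      rw [← h.2]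
      have : (ε * n) ^ 2 ≤ (AB.1.card : ℝ) * AB.1.card := by
        rw [sq]
        have h0 : 0 ≤ ε * n := by positivity
        exact mul_le_mul h.1.le h.1.le h0 (by positivity)
      gcongr
    · simp only [Finset.card_empty, Nat.cast_zero]; positivity
  have hBd : (Bd.card : ℝ) ≤ 4 ^ n * (exp 1 * m * exp (-(q * (ε * n) ^ 2))) * ((n : ℝ) ^ 2) ^ m := by
    calc (Bd.card : ℝ) ≤ ∑ AB, ((P AB).card : ℝ) := by exact_mod_cast Finset.card_biUnion_le
      _ ≤ ∑ AB : Finset (Fin n) × Finset (Fin n),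
          exp 1 * m * exp (-(q * (ε * n) ^ 2)) * ((n : ℝ) ^ 2) ^ m :=
        Finset.sum_le_sum fun AB _ => hP AB
      _ = _ := by
        rw [Finset.sum_const, nsmul_eq_mul]
        have : ((Finset.univ : Finset (Finset (Fin n) × Finset (Fin n))).card : ℝ) = 4 ^ n := by
          simp only [Finset.card_univ, Fintype.card_prod, Fintype.card_finset, Fintype.card_fin]
          push_cast
          rw [← mul_pow]; norm_num
        rw [this]; ring
  have hmax : ∀ ω : Fin m → Fin n × Fin n,
      (k : ℝ) * ((1 - ε) * n) - (if ω ∈ Bd then (k : ℝ) * ((1 - ε) * n) else 0) ≤ maxAssign ω := by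
    intro ω
    obtain ⟨A, B, hAB, hc, hle⟩ := det_lower k ω
    have hAn : (A.card : ℝ) ≤ n := by
      have := Finset.card_le_univ A
      simp at this
      exact_mod_cast this
    split_ifs with h
    · rw [sub_self]
      refine le_trans ?_ hle
      have : 0 ≤ (n : ℝ) - A.card := by linarith
      positivity
    · rw [sub_zero]
      refine le_trans ?_ hle
      gcongr
      have : (A.card : ℝ) ≤ ε * n := by
        by_contra hlt
        push Not at hlt
        apply h
        simp only [Bd, Finset.mem_biUnion, Finset.mem_univ, true_and]
        refine ⟨(A, B), ?_⟩
        simp only [P]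
        rw [if_pos ⟨hlt, hAB⟩]
        simpa using hc
      linarith
  rw [Emax_eq m n hn, le_div_iff₀ hN]
  refine le_trans ?_ (Finset.sum_le_sum fun ω _ => hmax ω)
  rw [Finset.sum_sub_distrib, Finset.sum_ite_mem, Finset.univ_inter, Finset.sum_const,
    Finset.sum_const, nsmul_eq_mul, nsmul_eq_mul]
  have hcard : ((Finset.univ : Finset (Fin m → Fin n × Fin n)).card : ℝ) = ((n : ℝ) ^ 2) ^ m := by
    simp [sq]
  rw [hcard]
  have hK : 0 ≤ (k : ℝ) * ((1 - ε) * n) := by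
    have : 0 ≤ 1 - ε := by linarith
    positivity
  have := mul_le_mul_of_nonneg_right hBd hK
  linarith

lemma upper_core (m n : ℕ) (hn : 0 < n) (ε l Λ : ℝ)
    (hl : l = (m : ℝ) / (n : ℝ) ^ 2) (hl0 : 0 < l) (hlog : 0 < log n)
    (hΛ : Λ = log (log n / l)) (herr : exp (-(ε * Λ)) ≤ ε) :
    EmaxAssign m n * Λ / (n * log n) * (1 - ε) ≤ 1 + ε := by
  have hn' : (0 : ℝ) < n := by exact_mod_cast hn
  have h := upper m n hn ((1 - ε) * Λ)
  rw [← hl] at h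
  have h1 : exp ((1 - ε) * Λ) = log n / l * exp (-(ε * Λ)) := by
    have : (1 - ε) * Λ = Λ + -(ε * Λ) := by ring
    rw [this, exp_add]
    congr 1
    rw [hΛ, exp_log (by positivity)]
  rw [h1] at h
  have h2 : l * n * (log n / l * exp (-(ε * Λ))) = n * log n * exp (-(ε * Λ)) := by
    field_simp
  rw [h2] at h
  have hp : 0 < n * log n := by positivity
  rw [div_mul_eq_mul_div, div_le_iff₀ hp]
  have := mul_le_mul_of_nonneg_left herr hp.le
  linarith

lemma lower_core (m n : ℕ) (hm : 0 < m) (hn : 0 < n) (ε l Λ : ℝ) (hε : 0 < ε) (hε1 : ε < 1)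
    (hl : l = (m : ℝ) / (n : ℝ) ^ 2) (hl0 : 0 < l) (hlog : 2 ≤ log n)
    (hΛ : Λ = log (log n / l)) (hΛ2 : 2 ≤ Λ) (hΛε : Λ ≤ ε / 4 * log n)
    (hlε : l ≤ ε / 4 * log n) (hbig : 7 ≤ ε ^ 2 * exp (ε / 2 * log n))
    (hsmall : exp (-(n : ℝ)) ≤ ε) :
    (1 - ε) ^ 3 ≤ EmaxAssign m n * Λ / (n * log n) := by
  have hn' : (0 : ℝ) < n := by exact_mod_cast hn
  have hn1 : (1 : ℝ) ≤ n := by exact_mod_cast hn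
  have hm' : (0 : ℝ) < m := by exact_mod_cast hm
  have hlog0 : 0 < log n := by linarith
  have hΛ0 : 0 < Λ := by linarith
  have h1ε : 0 < 1 - ε := by linarith
  set k : ℕ := ⌈(1 - ε) * log n / Λ⌉₊ with hk
  have hk1 : (1 - ε) * log n / Λ ≤ k := Nat.le_ceil _
  have hk2 : (k : ℝ) < (1 - ε) * log n / Λ + 1 := Nat.ceil_lt_add_one (by positivity)
  have hk0 : 0 < (k : ℝ) := lt_of_lt_of_le (by positivity) hk1
  have hkΛ1 : (1 - ε) * log n ≤ k * Λ := by rwa [div_le_iff₀ hΛ0] at hk1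
  have hkΛ2 : k * Λ ≤ (1 - ε) * log n + Λ := by
    have := mul_le_mul_of_nonneg_right hk2.le hΛ0.le
    rwa [add_mul, div_mul_cancel₀ _ hΛ0.ne', one_mul] at this
  have hklog : (k : ℝ) ≤ log n := by
    have : (1 - ε) * log n / Λ ≤ log n / 2 := by
      rw [div_le_div_iff₀ hΛ0 (by norm_num)]
      nlinarith
    linarith
  set q : ℝ := exp (-l) * l ^ k / k.factorial with hq
  have hmain := lower m n k hm hn l q ε hε.le hε1.le hl hq
  have hq1 : exp (-((1 - ε / 2) * log n)) ≤ q := by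
    have hf : (k.factorial : ℝ) ≤ log n ^ k := by
      have : (k.factorial : ℝ) ≤ (k : ℝ) ^ k := by exact_mod_cast k.factorial_le_pow
      exact this.trans (pow_le_pow_left₀ hk0.le hklog k)
    have hfp : (0 : ℝ) < k.factorial := by exact_mod_cast k.factorial_pos
    have h1 : exp (-l) * l ^ k / log n ^ k ≤ q := by
      rw [hq]; gcongr
    refine le_trans ?_ h1
    have h2 : exp (-l) * l ^ k / log n ^ k = exp (-l - k * Λ) := by
      rw [sub_eq_add_neg, exp_add, ← mul_neg, exp_nat_mul, exp_neg Λ, hΛ, exp_log (by positivity),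
        inv_div, div_pow, mul_div_assoc]
    rw [h2]
    apply exp_le_exp.mpr
    linarith
  have hq2 : 7 * (n : ℝ) ≤ q * (ε * n) ^ 2 := by
    have h3 : exp (-((1 - ε / 2) * log n)) * n = exp (ε / 2 * log n) := by
      nth_rw 2 [← exp_log hn']
      rw [← exp_add]; congr 1; ring
    calc 7 * (n : ℝ) ≤ (ε ^ 2 * exp (ε / 2 * log n)) * n := by gcongr
      _ = exp (-((1 - ε / 2) * log n)) * (ε * n) ^ 2 := by rw [← h3]; ring
      _ ≤ _ := by gcongr
  have hexp1 : (2 : ℝ) ≤ exp 1 := by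
    have := add_one_le_exp (1 : ℝ)
    linarith
  have h4 : (4 : ℝ) ^ n ≤ exp (2 * n) := by
    rw [mul_comm, exp_nat_mul]
    apply pow_le_pow_left₀ (by norm_num)
    have : exp 2 = exp 1 * exp 1 := by rw [← exp_add]; norm_num
    nlinarith
  have hnexp : (n : ℝ) ≤ exp n := by
    have := add_one_le_exp (n : ℝ)
    linarith
  have hmb : (m : ℝ) ≤ exp (3 * n) := by
    have h5 : (m : ℝ) = l * n ^ 2 := by rw [hl]; field_simp
    have h6 : l ≤ n := by
      have := log_le_sub_one_of_pos hn'
      nlinarith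
    calc (m : ℝ) ≤ n * n ^ 2 := by rw [h5]; gcongr
      _ = (n : ℝ) ^ 3 := by ring
      _ ≤ (exp n) ^ 3 := by gcongr
      _ = _ := by rw [← exp_nat_mul]; norm_num
  have herr : 4 ^ n * (exp 1 * m * exp (-(q * (ε * n) ^ 2))) ≤ ε := by
    calc (4 : ℝ) ^ n * (exp 1 * m * exp (-(q * (ε * n) ^ 2)))
        ≤ exp (2 * n) * (exp n * exp (3 * n) * exp (-(7 * n))) := by gcongr
      _ = exp (-n) := by
        rw [← exp_add, ← exp_add, ← exp_add]; congr 1; ring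
      _ ≤ ε := hsmall
  have hp : 0 < n * log n := by positivity
  rw [le_div_iff₀ hp]
  calc (1 - ε) ^ 3 * (n * log n) = (1 - ε) * log n * ((1 - ε) * n) * (1 - ε) := by ring
    _ ≤ k * Λ * ((1 - ε) * n) * (1 - 4 ^ n * (exp 1 * m * exp (-(q * (ε * n) ^ 2)))) := by
      gcongr
    _ = (k : ℝ) * ((1 - ε) * n) * (1 - 4 ^ n * (exp 1 * m * exp (-(q * (ε * n) ^ 2)))) * Λ := by ring
    _ ≤ EmaxAssign m n * Λ := by gcongr

/-- **Quasi-Poissonian zone.**  If `m(n) p_n / log n → 0` (with `p_n = n⁻²`) while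
`n^δ m(n) p_n → ∞` for every `δ > 0`, then
`E[max_σ ∑ i, X_{i σ(i)}] = (n log n / log (log n / (m(n) p_n))) (1 + o(1))`. -/
theorem expected_max_quasiPoisson (m : ℕ → ℕ) (hm : ∀ n, 0 < m n)
    (h0 : Tendsto (fun n : ℕ => ((m n : ℝ) / (n : ℝ) ^ 2) / Real.log n) atTop (nhds 0))
    (hδ : ∀ δ : ℝ, 0 < δ →
      Tendsto (fun n : ℕ => (n : ℝ) ^ δ * ((m n : ℝ) / (n : ℝ) ^ 2)) atTop atTop) :
    Tendsto
      (fun n : ℕ =>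
        EmaxAssign (m n) n * Real.log (Real.log n / ((m n : ℝ) / (n : ℝ) ^ 2)) /
          ((n : ℝ) * Real.log n))
      atTop (nhds 1) := by
  have hlog : Tendsto (fun n : ℕ => log (n : ℝ)) atTop atTop :=
    tendsto_log_atTop.comp tendsto_natCast_atTop_atTop
  have hl0 : ∀ n : ℕ, 0 < n → 0 < (m n : ℝ) / (n : ℝ) ^ 2 := by
    intro n hn
    have h1 : (0 : ℝ) < m n := by exact_mod_cast hm n
    have h2 : (0 : ℝ) < n := by exact_mod_cast hn
    positivity
  have hL : Tendsto (fun n : ℕ => log n / ((m n : ℝ) / (n : ℝ) ^ 2)) atTop atTop := by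
    have h1 : Tendsto (fun n : ℕ => ((m n : ℝ) / (n : ℝ) ^ 2) / Real.log n) atTop (nhdsWithin 0 (Set.Ioi 0)) := by
      rw [tendsto_nhdsWithin_iff]
      refine ⟨h0, ?_⟩
      filter_upwards [hlog.eventually_gt_atTop 0, eventually_gt_atTop 0] with n hn hn0
      exact div_pos (hl0 n hn0) hn
    refine h1.inv_tendsto_nhdsGT_zero.congr fun n => ?_
    simp only [Pi.inv_apply, inv_div]
  have hΛ := tendsto_log_atTop.comp hL
  have hup : ∀ ε : ℝ, 0 < ε → ∀ᶠ n : ℕ in atTop,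
      EmaxAssign (m n) n * Real.log (Real.log n / ((m n : ℝ) / (n : ℝ) ^ 2)) /
          ((n : ℝ) * Real.log n) * (1 - ε) ≤ 1 + ε := by
    intro ε hε
    have h1 : Tendsto (fun n : ℕ => exp (-(ε * log (log n / ((m n : ℝ) / (n : ℝ) ^ 2))))) atTop
        (nhds 0) :=
      tendsto_exp_neg_atTop_nhds_zero.comp (hΛ.const_mul_atTop hε)
    filter_upwards [eventually_gt_atTop 0, hlog.eventually_gt_atTop 0,
      h1.eventually_le_const hε] with n hn hln he
    exact upper_core (m n) n hn ε _ _ rfl (hl0 n hn) hln rfl he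
  have hlow : ∀ ε : ℝ, 0 < ε → ε < 1 → ∀ᶠ n : ℕ in atTop,
      (1 - ε) ^ 3 ≤ EmaxAssign (m n) n * Real.log (Real.log n / ((m n : ℝ) / (n : ℝ) ^ 2)) /
          ((n : ℝ) * Real.log n) := by
    intro ε hε hε1
    have h1 : Tendsto (fun n : ℕ => exp (-(n : ℝ))) atTop (nhds 0) :=
      tendsto_exp_neg_atTop_nhds_zero.comp tendsto_natCast_atTop_atTop
    have h2 : Tendsto (fun n : ℕ => ε ^ 2 * exp (ε / 2 * log n)) atTop atTop :=
      (tendsto_exp_atTop.comp (hlog.const_mul_atTop (by positivity : 0 < ε / 2))).const_mul_atTop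
        (by positivity)
    have h3 : ∀ᶠ n : ℕ in atTop, log (n : ℝ) ≤ (n : ℝ) ^ (ε / 8) := by
      have h4 := (isLittleO_log_rpow_atTop (by positivity : 0 < ε / 8)).bound one_pos
      have h5 := tendsto_natCast_atTop_atTop (R := ℝ) |>.eventually h4
      filter_upwards [h5] with n hn
      rw [one_mul, norm_eq_abs, norm_eq_abs, abs_of_nonneg (by positivity : 0 ≤ (n : ℝ) ^ (ε / 8))] at hn
      exact (le_abs_self _).trans hn
    filter_upwards [eventually_gt_atTop 0, hlog.eventually_ge_atTop 2, hΛ.eventually_ge_atTop 2,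
      h1.eventually_le_const hε, h2.eventually_ge_atTop 7, h3,
      (hδ (ε / 8) (by positivity)).eventually_ge_atTop 1,
      h0.eventually_le_const (by positivity : 0 < ε / 4)] with n hn hln hΛn hs hb h3n hd hln0
    have hl := hl0 n hn
    have hn' : (0 : ℝ) < n := by exact_mod_cast hn
    have hln' : 0 < log (n : ℝ) := by linarith
    refine lower_core (m n) n (hm n) hn ε _ _ hε hε1 rfl hl hln rfl hΛn ?_ ?_ hb hs
    · have h6 : log n / ((m n : ℝ) / (n : ℝ) ^ 2) ≤ (n : ℝ) ^ (ε / 8) * (n : ℝ) ^ (ε / 8) := by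
        rw [div_le_iff₀ hl, mul_assoc]
        have h7 : 0 ≤ (n : ℝ) ^ (ε / 8) := by positivity
        nlinarith
      have h8 := log_le_log (by positivity) h6
      rw [← rpow_add hn', log_rpow hn'] at h8
      linarith
    · rwa [div_le_iff₀ hln'] at hln0
  rw [tendsto_order]
  constructor
  · intro a ha
    have h1 : Tendsto (fun ε : ℝ => (1 - ε) ^ 3) (nhdsWithin 0 (Set.Ioi 0)) (nhds 1) := by
      have : Continuous (fun ε : ℝ => (1 - ε) ^ 3) := by fun_prop
      have h2 := this.tendsto 0
      norm_num at h2
      exact h2.mono_left nhdsWithin_le_nhds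
    obtain ⟨ε, h3, h4, h5⟩ := ((h1.eventually_const_lt ha).and
      (Ioo_mem_nhdsGT (zero_lt_one' ℝ))).exists
    filter_upwards [hlow ε h4 h5] with n hn
    linarith
  · intro b hb
    have h1 : Tendsto (fun ε : ℝ => b * (1 - ε) - (1 + ε)) (nhdsWithin 0 (Set.Ioi 0)) (nhds (b - 1)) := by
      have : Continuous (fun ε : ℝ => b * (1 - ε) - (1 + ε)) := by fun_prop
      have h2 := this.tendsto 0
      norm_num at h2
      exact h2.mono_left nhdsWithin_le_nhds
    obtain ⟨ε, h3, h4, h5⟩ := ((h1.eventually_const_lt (by linarith : 0 < b - 1)).and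
      (Ioo_mem_nhdsGT (zero_lt_one' ℝ))).exists
    filter_upwards [hup ε h4] with n hn
    refine lt_of_mul_lt_mul_right ?_ (by linarith : 0 ≤ 1 - ε)
    linarith

end
end
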